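/- arXiv:1810.09344 — 3 statements merged into one kernel-verified Lean document; each statement's English description precedes it below -/
import Mathlib

section
/- Let V be a real Hilbert space, r > α where α := ln 3/(2·ln 2), and let v : Y → V belong to the class A^r with ‖v‖_{A^r} ≤ M0 and sup_{y∈Y} ‖v(y)‖ = M > 0, where Y = [−1,1]^d. Let m ≥ 1 be an integer such that 4·M0·m^{−r+α} < M, and let N ≥ 1. Then the set of N-tuples (y_1,…,y_N) ∈ Y^N with max_{1≤i≤N} ‖v(y_i)‖ ≥ M/(8·m^α) has ρ_C^{⊗N}-measure at least 1 − (1 − 3/(4·m^{2α}))^N, where ρ_C is the tensor product Chebychev probability measure on Y given by dρ_C(y) = ∏_{j=1}^d dy_j/(π·√(1−y_j²)). -/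
open MeasureTheory

/-- The parameter cube `Y = [-1,1]^d`. -/
def cube (d : ℕ) : Set (Fin d → ℝ) := Set.univ.pi fun _ => Set.Icc (-1 : ℝ) 1

/-- A finite set `Λ ⊂ ℕ^d` is downward closed if `ν ∈ Λ` and `μ ≤ ν` (componentwise)
imply `μ ∈ Λ`. -/
def DownwardClosed {d : ℕ} (Λ : Finset (Fin d → ℕ)) : Prop :=
  ∀ ν ∈ Λ, ∀ μ : Fin d → ℕ, μ ≤ ν → μ ∈ Λ

/-- The `V`-valued polynomial `y ↦ ∑_{ν ∈ Λ} y^ν • a_ν`, with `y^ν = ∏_j y_j^{ν_j}`. -/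
noncomputable def polyEval {d : ℕ} {V : Type*} [AddCommGroup V] [Module ℝ V]
    (Λ : Finset (Fin d → ℕ)) (a : (Fin d → ℕ) → V) (y : Fin d → ℝ) : V :=
  ∑ ν ∈ Λ, (∏ j, y j ^ ν j) • a ν

/-- `δ_m(v)`: the error of best uniform approximation of `v` on `Y = [-1,1]^d`
by `V`-valued polynomials supported on a downward closed index set of cardinality `m`. -/
noncomputable def deltaApprox {d : ℕ} {V : Type*} [NormedAddCommGroup V] [Module ℝ V]
    (v : (Fin d → ℝ) → V) (m : ℕ) : ℝ :=
  sInf { e | ∃ (Λ : Finset (Fin d → ℕ)) (a : (Fin d → ℕ) → V),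
    DownwardClosed Λ ∧ Λ.card = m ∧ e = ⨆ y ∈ cube d, ‖v y - polyEval Λ a y‖ }

/-- Membership in the approximation class `A^r`: `δ_m(v) ≤ C m^{-r}` for all `m ≥ 1`. -/
def MemA {d : ℕ} {V : Type*} [NormedAddCommGroup V] [Module ℝ V]
    (r : ℝ) (v : (Fin d → ℝ) → V) : Prop :=
  ∃ C : ℝ, 0 ≤ C ∧ ∀ m : ℕ, 1 ≤ m → deltaApprox v m ≤ C * (m : ℝ) ^ (-r)

/-- The seminorm `|v|_{A^r}`: the smallest constant `C ≥ 0` with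
`δ_m(v) ≤ C m^{-r}` for all `m ≥ 1`. -/
noncomputable def semiA {d : ℕ} {V : Type*} [NormedAddCommGroup V] [Module ℝ V]
    (r : ℝ) (v : (Fin d → ℝ) → V) : ℝ :=
  sInf { C | 0 ≤ C ∧ ∀ m : ℕ, 1 ≤ m → deltaApprox v m ≤ C * (m : ℝ) ^ (-r) }

/-- The norm `‖v‖_{A^r} = max{‖v‖_{L^∞(Y,V)}, |v|_{A^r}}`. -/
noncomputable def normA {d : ℕ} {V : Type*} [NormedAddCommGroup V] [Module ℝ V]
    (r : ℝ) (v : (Fin d → ℝ) → V) : ℝ :=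
  max (⨆ y ∈ cube d, ‖v y‖) (semiA r v)

/-- The uniform probability measure on the cube `Y = [-1,1]^d`. -/
noncomputable def uniformCube (d : ℕ) : Measure (Fin d → ℝ) :=
  Measure.pi fun _ => (2 : ENNReal)⁻¹ • (volume.restrict (Set.Icc (-1 : ℝ) 1))

/-- The tensor product Chebychev probability measure on the cube `Y = [-1,1]^d`,
`dρ_C(y) = ∏_j dy_j / (π √(1 - y_j²))`. -/
noncomputable def chebCube (d : ℕ) : Measure (Fin d → ℝ) :=
  Measure.pi fun _ =>
    (volume.restrict (Set.Icc (-1 : ℝ) 1)).withDensity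
      fun t => ENNReal.ofReal (1 / (Real.pi * Real.sqrt (1 - t ^ 2)))

lemma conv_incr {β a b : ℝ} (hβ : 1 ≤ β) (h2 : (2:ℝ) ^ β = 3) (hb : 0 ≤ b) (hab : b ≤ a) :
    a ^ β + 2 * b ^ β ≤ (a + b) ^ β := by
  rcases hb.eq_or_lt with rfl | hb
  · simp [Real.zero_rpow (by linarith : β ≠ 0)]
  have hc := convexOn_rpow hβ
  have e : (b + b) ^ β = 3 * b ^ β := by
    rw [← two_mul, Real.mul_rpow (by norm_num) hb.le, h2]
  rcases hab.eq_or_lt with rfl | hab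
  · rw [e]; linarith
  have hs := hc.2
  have ha0 : 0 < a := hb.trans hab
  set t := (a - b) / a with ht
  have t0 : 0 ≤ t := div_nonneg (by linarith) ha0.le
  have t1 : 0 ≤ 1 - t := by rw [ht, sub_nonneg, div_le_one ha0]; linarith
  have hta : t * a = a - b := by rw [ht]; field_simp
  have i1 := hs (Set.mem_Ici.2 hb.le) (Set.mem_Ici.2 (by linarith : 0 ≤ a + b)) t1 t0 (by ring)
  have i2 := hs (Set.mem_Ici.2 hb.le) (Set.mem_Ici.2 (by linarith : 0 ≤ a + b)) t0 t1 (by ring)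
  simp only [smul_eq_mul] at i1 i2
  rw [show (1 - t) * b + t * (a + b) = a by linear_combination hta] at i1
  rw [show t * b + (1 - t) * (a + b) = b + b by linear_combination -hta] at i2
  rw [e] at i2
  linarith

def wt {d : ℕ} (ν : Fin d → ℕ) : ℝ := ∏ j, if ν j = 0 then 1 else 2


lemma wt_update {d : ℕ} (ν : Fin d → ℕ) (j : Fin d) (h : ν j ≠ 0) :
    wt ν = 2 * wt (Function.update ν j 0) := by
  classical
  unfold wt
  rw [← Finset.mul_prod_erase _ _ (Finset.mem_univ j), ← Finset.mul_prod_erase (a := j) (f := fun i => if Function.update ν j 0 i = 0 then (1:ℝ) else 2) _ (Finset.mem_univ j)]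
  simp only [h, Function.update_self, if_true, if_false, one_mul]
  congr 1
  refine Finset.prod_congr rfl fun i hi => ?_
  rw [Function.update_of_ne (Finset.ne_of_mem_erase hi)]

lemma sum_wt_le {d : ℕ} {β : ℝ} (hβ : 1 ≤ β) (h2 : (2:ℝ) ^ β = 3) :
    ∀ (n : ℕ) (Λ : Finset (Fin d → ℕ)), DownwardClosed Λ → Λ.card = n → ∑ ν ∈ Λ, wt ν ≤ (n : ℝ) ^ β := by
  classical
  intro n
  induction n using Nat.strong_induction_on with
  | _ n ih =>
  intro Λ hΛ hn
  by_cases h0 : ∀ ν ∈ Λ, ν = 0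
  · rcases Λ.eq_empty_or_nonempty with rfl | ⟨ν, hν⟩
    · simp at hn; subst hn; simp [Real.zero_rpow (by linarith : β ≠ 0)]
    · have : Λ = {0} := by
        ext x; constructor
        · intro hx; simp [h0 x hx]
        · intro hx; rw [Finset.mem_singleton.1 hx, ← h0 ν hν]; exact hν
      subst this
      simp at hn; subst hn; simp [wt]
  push Not at h0
  obtain ⟨ν₀, hν₀, hne⟩ := h0
  obtain ⟨j, hj⟩ := Function.ne_iff.1 hne
  obtain ⟨ν₁, hν₁, hmax⟩ := Finset.exists_max_image Λ (fun ν => ν j) ⟨ν₀, hν₀⟩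
  set k := ν₁ j with hk
  have hk0 : k ≠ 0 := by
    have : ν₀ j ≤ k := hmax ν₀ hν₀
    simp at hj; omega
  set A := Λ.filter (fun ν => ν j ≠ k) with hA
  set T := Λ.filter (fun ν => ν j = k) with hT
  set B := T.image (fun ν => Function.update ν j 0) with hB
  have inj : Set.InjOn (fun ν : Fin d → ℕ => Function.update ν j 0) T := by
    intro x hx y hy hxy
    simp [hT] at hx hy
    ext i
    by_cases hi : i = j
    · subst hi; rw [hx.2, hy.2]
    · have := congrFun hxy i
      simpa [Function.update_of_ne hi] using this
  have cB : B.card = T.card := Finset.card_image_of_injOn inj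
  have cAT : T.card + A.card = n := by
    rw [← hn]; exact Finset.card_filter_add_card_filter_not (s := Λ) _
  have Tpos : 0 < T.card := Finset.card_pos.2 ⟨ν₁, by simp [hT, hν₁]; rfl⟩
  have BA : B ⊆ A := by
    intro x hx
    simp only [hB, Finset.mem_image] at hx
    obtain ⟨y, hy, rfl⟩ := hx
    simp [hT] at hy
    simp only [hA, Finset.mem_filter, Function.update_self]
    refine ⟨hΛ y hy.1 _ ?_, fun h => hk0 h.symm⟩
    intro i
    by_cases hi : i = j
    · subst hi; simp
    · simp [Function.update_of_ne hi]
  have cBA := Finset.card_le_card BA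
  have dA : DownwardClosed A := by
    intro x hx y hy
    simp only [hA, Finset.mem_filter] at hx ⊢
    refine ⟨hΛ x hx.1 y hy, ?_⟩
    have q1 : x j ≤ k := hmax x hx.1
    have q2 : y j ≤ x j := hy j
    have q3 : x j ≠ k := hx.2
    omega
  have dB : DownwardClosed B := by
    intro x hx y hy
    simp only [hB, Finset.mem_image] at hx ⊢
    obtain ⟨z, hz, rfl⟩ := hx
    simp only [hT, Finset.mem_filter] at hz ⊢
    have hyj := hy j
    simp at hyj
    refine ⟨Function.update y j k, ⟨hΛ z hz.1 _ ?_, by simp⟩, ?_⟩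
    · intro i
      by_cases hi : i = j
      · subst hi; simp [hz.2]
      · have := hy i
        simpa [Function.update_of_ne hi] using this
    · ext i
      by_cases hi : i = j
      · subst hi; simp [hyj]
      · simp [Function.update_of_ne hi]
  have iA := ih A.card (by omega) A dA rfl
  have iB := ih B.card (by omega) B dB rfl
  have sT : ∑ ν ∈ T, wt ν = 2 * ∑ ν ∈ B, wt ν := by
    rw [hB, Finset.sum_image inj, Finset.mul_sum]
    refine Finset.sum_congr rfl fun x hx => wt_update x j ?_
    simp [hT] at hx
    rw [hx.2]; exact hk0
  have hs : ∑ ν ∈ T, wt ν + ∑ ν ∈ A, wt ν = ∑ ν ∈ Λ, wt ν :=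
    Finset.sum_filter_add_sum_filter_not Λ _ _
  have := conv_incr hβ h2 (Nat.cast_nonneg B.card) (by exact_mod_cast cBA : (B.card:ℝ) ≤ A.card)
  rw [show (n:ℝ) = A.card + B.card by rw [cB, ← cAT]; push_cast; ring]
  linarith


noncomputable def cheb1 : Measure ℝ := (volume.restrict (Set.Icc (-1 : ℝ) 1)).withDensity
      fun t => ENNReal.ofReal (1 / (Real.pi * Real.sqrt (1 - t ^ 2)))

open Polynomial.Chebyshev in
lemma cheb1_eq : cheb1 = ENNReal.ofReal (1 / Real.pi) • measureT := by
  unfold cheb1 measureT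
  rw [← Measure.restrict_congr_set Ioc_ae_eq_Icc, restrict_withDensity measurableSet_Ioc,
    ← withDensity_smul' _ _ (by simp)]
  congr 1
  ext t
  simp only [Pi.smul_apply, smul_eq_mul]
  rw [one_div, mul_inv, ENNReal.ofReal_mul (by positivity), one_div]
  congr 1
  rw [ENNReal.ofReal, ← Real.sqrt_inv]
  congr 1
  ext
  simp

open Polynomial.Chebyshev Polynomial in
lemma cheb1_integrable {f : ℝ → ℝ} (hf : Continuous f) : Integrable f cheb1 := by
  rw [cheb1_eq]
  exact (integrable_measureT hf.continuousOn).smul_measure (by simp)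

open Polynomial.Chebyshev Polynomial in
lemma cheb1_TT (n k : ℕ) : ∫ x, (T ℝ n).eval x * (T ℝ k).eval x ∂cheb1 =
    if n = k then (if n = 0 then 1 else 1/2) else 0 := by
  rw [cheb1_eq, integral_smul_measure, ENNReal.toReal_ofReal (by positivity)]
  split_ifs with h h0
  · subst h; subst h0
    have := integral_eval_T_real_mul_self_measureT_zero
    rw [Nat.cast_zero, this]; simp [Real.pi_ne_zero]
  · subst h
    rw [integral_T_real_mul_self_measureT_of_ne_zero h0]
    simp; field_simp
  · rw [integral_eval_T_real_mul_eval_T_real_measureT_of_ne h]; simp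

instance : IsProbabilityMeasure cheb1 := by
  have h := cheb1_TT 0 0
  simp at h
  have hf : IsFiniteMeasure cheb1 := by
    have := cheb1_integrable (f := fun _ => (1:ℝ)) continuous_const
    rcases (integrable_const_iff (c := (1:ℝ))).1 this with h | h
    · simp at h
    · exact h
  constructor
  rw [Measure.real, ENNReal.toReal_eq_one_iff] at h
  exact h

lemma cheb1_Icc : ∀ᵐ t ∂cheb1, t ∈ Set.Icc (-1:ℝ) 1 := by
  have : cheb1 ≪ volume.restrict (Set.Icc (-1 : ℝ) 1) := withDensity_absolutelyContinuous _ _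
  exact this.ae_le (ae_restrict_mem measurableSet_Icc)

open Polynomial.Chebyshev Polynomial in
lemma X_mul_T_mem (n k : ℕ) (h : k ≤ n) : X * T ℝ k ∈ Submodule.span ℝ ((fun m : ℕ => T ℝ m) '' (Finset.range (n+2) : Finset ℕ)) := by
  have key : X * T ℝ k = (1/2 : ℝ) • T ℝ ((k:ℤ)+1) + (1/2 : ℝ) • T ℝ (((k:ℤ)-1).natAbs : ℕ) := by
    rw [T_natAbs, T_add_one, ← smul_add, sub_add_cancel, mul_assoc, smul_eq_C_mul, ← mul_assoc, ← mul_assoc,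
      show (2 : ℝ[X]) = Polynomial.C 2 from rfl, ← Polynomial.C_mul]
    norm_num
  rw [key]
  refine add_mem (Submodule.smul_mem _ _ (Submodule.subset_span ⟨k+1, ?_, by simp⟩)) (Submodule.smul_mem _ _ (Submodule.subset_span ⟨((k:ℤ)-1).natAbs, ?_, by simp⟩))
  · simp; omega
  · simp; omega

open Polynomial.Chebyshev Polynomial in
lemma X_pow_mem (n : ℕ) : X ^ n ∈ Submodule.span ℝ ((fun m : ℕ => T ℝ m) '' (Finset.range (n+1) : Finset ℕ)) := by
  induction n with
  | zero => exact Submodule.subset_span ⟨0, by simp, by simp⟩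
  | succ n ih =>
    rw [pow_succ']
    have : ∀ p ∈ Submodule.span ℝ ((fun m : ℕ => T ℝ m) '' (Finset.range (n+1) : Finset ℕ)),
      X * p ∈ Submodule.span ℝ ((fun m : ℕ => T ℝ m) '' (Finset.range (n+2) : Finset ℕ)) := by
      intro p hp
      induction hp using Submodule.span_induction with
      | mem x hx =>
        obtain ⟨k, hk, rfl⟩ := hx
        exact X_mul_T_mem n k (by simp at hk; omega)
      | zero => simp
      | add x y _ _ hx hy => rw [mul_add]; exact add_mem hx hy
      | smul a x _ hx => rw [mul_smul_comm]; exact Submodule.smul_mem _ _ hx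
    exact this _ ih

open Polynomial.Chebyshev Polynomial in
lemma exists_coeff : ∃ c : ℕ → ℕ → ℝ, ∀ n x, x ^ n = ∑ k ∈ Finset.range (n+1), c n k * (T ℝ k).eval x := by
  have : ∀ n : ℕ, ∃ c : ℕ → ℝ, ∀ x, x ^ n = ∑ k ∈ Finset.range (n+1), c k * (T ℝ k).eval x := by
    intro n
    obtain ⟨c, hc⟩ := (Submodule.mem_span_image_finset_iff_exists_fun' ℝ).1 (X_pow_mem n)
    refine ⟨c, fun x => ?_⟩
    have := congrArg (eval x) hc
    simpa [eval_finsetSum] using this.symm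
  choose c hc using this
  exact ⟨c, hc⟩

open Polynomial.Chebyshev in
/-- Tensor product Chebyshev polynomial. -/
noncomputable def tT {d : ℕ} (ν : Fin d → ℕ) (y : Fin d → ℝ) : ℝ :=
  ∏ j, (T ℝ (ν j)).eval (y j)

lemma tT_cont {d : ℕ} (ν : Fin d → ℕ) : Continuous (tT ν) := by
  unfold tT; fun_prop

lemma tT_abs {d : ℕ} (ν : Fin d → ℕ) {y : Fin d → ℝ} (hy : y ∈ cube d) : |tT ν y| ≤ 1 := by
  unfold tT
  rw [Finset.abs_prod]
  refine Finset.prod_le_one (fun _ _ => abs_nonneg _) fun j _ => ?_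
  exact Polynomial.Chebyshev.abs_eval_T_real_le_one _ (abs_le.2 (hy j trivial))

lemma chebCube_eq (d : ℕ) : chebCube d = Measure.pi fun _ => cheb1 := rfl

instance (d : ℕ) : IsProbabilityMeasure (chebCube d) := by
  rw [chebCube_eq]; infer_instance

lemma cube_closed (d : ℕ) : MeasurableSet (cube d) :=
  MeasurableSet.univ_pi fun _ => measurableSet_Icc

lemma chebCube_cube (d : ℕ) : chebCube d (cube d) = 1 := by
  have h : cheb1 (Set.Icc (-1) 1) = 1 := (prob_compl_eq_zero_iff measurableSet_Icc).1 cheb1_Icc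
  rw [chebCube_eq, cube, Measure.pi_pi]; simp [h]

lemma tT_int {d : ℕ} (ν μ : Fin d → ℕ) : ∫ y, tT ν y * tT μ y ∂chebCube d =
    if ν = μ then (wt ν)⁻¹ else 0 := by
  unfold tT
  simp_rw [← Finset.prod_mul_distrib]
  rw [chebCube_eq, integral_fintype_prod_eq_prod (fun j t =>
    (Polynomial.Chebyshev.T ℝ (ν j)).eval t * (Polynomial.Chebyshev.T ℝ (μ j)).eval t)]
  simp_rw [cheb1_TT]
  split_ifs with h
  · subst h
    unfold wt
    rw [← Finset.prod_inv_distrib]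
    refine Finset.prod_congr rfl fun j _ => ?_
    split_ifs <;> simp_all
  · obtain ⟨j, hj⟩ := Function.ne_iff.1 h
    exact Finset.prod_eq_zero (Finset.mem_univ j) (if_neg hj)

lemma tT_integrable {d : ℕ} (ν μ : Fin d → ℕ) :
    Integrable (fun y => tT ν y * tT μ y) (chebCube d) := by
  unfold tT
  simp_rw [← Finset.prod_mul_distrib]
  rw [chebCube_eq]
  exact Integrable.fintype_prod (f := fun j t =>
    (Polynomial.Chebyshev.T ℝ (ν j)).eval t * (Polynomial.Chebyshev.T ℝ (μ j)).eval t)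
    fun j => cheb1_integrable (by fun_prop)

lemma wt_pos {d : ℕ} (ν : Fin d → ℕ) : 0 < wt ν :=
  Finset.prod_pos fun _ _ => by split_ifs <;> norm_num

section
variable {d : ℕ} {V : Type*} [NormedAddCommGroup V] [InnerProductSpace ℝ V]

lemma normsq_expand (Λ : Finset (Fin d → ℕ)) (c : (Fin d → ℕ) → V) (y : Fin d → ℝ) :
    ‖∑ ν ∈ Λ, tT ν y • c ν‖ ^ 2 =
      ∑ ν ∈ Λ, ∑ μ ∈ Λ, (tT ν y * tT μ y) * inner ℝ (c ν) (c μ) := by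
  rw [← real_inner_self_eq_norm_sq, sum_inner]
  refine Finset.sum_congr rfl fun ν _ => ?_
  rw [inner_sum]
  refine Finset.sum_congr rfl fun μ _ => ?_
  rw [real_inner_smul_left, real_inner_smul_right]; ring

lemma normsq_integrable (Λ : Finset (Fin d → ℕ)) (c : (Fin d → ℕ) → V) :
    Integrable (fun y => ‖∑ ν ∈ Λ, tT ν y • c ν‖ ^ 2) (chebCube d) := by
  simp_rw [normsq_expand]
  exact integrable_finsetSum _ fun ν _ => integrable_finsetSum _ fun μ _ =>
    (tT_integrable ν μ).mul_const _

lemma normsq_integral (Λ : Finset (Fin d → ℕ)) (c : (Fin d → ℕ) → V) :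
    ∫ y, ‖∑ ν ∈ Λ, tT ν y • c ν‖ ^ 2 ∂chebCube d = ∑ ν ∈ Λ, (wt ν)⁻¹ * ‖c ν‖ ^ 2 := by
  simp_rw [normsq_expand]
  rw [integral_finsetSum _ fun ν _ => integrable_finsetSum _ fun μ _ =>
    (tT_integrable ν μ).mul_const _]
  refine Finset.sum_congr rfl fun ν hν => ?_
  rw [integral_finsetSum _ fun μ _ => (tT_integrable ν μ).mul_const _]
  simp_rw [integral_mul_const, tT_int, ite_mul, zero_mul]
  rw [Finset.sum_ite_eq, if_pos hν, real_inner_self_eq_norm_sq]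

lemma norm_le_sum (Λ : Finset (Fin d → ℕ)) (c : (Fin d → ℕ) → V) {y : Fin d → ℝ}
    (hy : y ∈ cube d) : ‖∑ ν ∈ Λ, tT ν y • c ν‖ ≤ ∑ ν ∈ Λ, ‖c ν‖ := by
  refine norm_sum_le_of_le _ fun ν _ => ?_
  rw [norm_smul]
  exact mul_le_of_le_one_left (norm_nonneg _) (tT_abs ν hy)

lemma normsq_le (Λ : Finset (Fin d → ℕ)) (c : (Fin d → ℕ) → V) {y : Fin d → ℝ}
    (hy : y ∈ cube d) : ‖∑ ν ∈ Λ, tT ν y • c ν‖ ^ 2 ≤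
      (∑ ν ∈ Λ, wt ν) * ∫ y, ‖∑ ν ∈ Λ, tT ν y • c ν‖ ^ 2 ∂chebCube d := by
  rw [normsq_integral]
  refine (pow_le_pow_left₀ (norm_nonneg _) (norm_le_sum Λ c hy) 2).trans ?_
  refine Finset.sum_sq_le_sum_mul_sum_of_sq_eq_mul Λ (fun ν _ => (wt_pos ν).le)
    (fun ν _ => by have := wt_pos ν; positivity) fun ν _ => ?_
  rw [← mul_assoc, mul_inv_cancel₀ (wt_pos ν).ne', one_mul]

lemma polyEval_eq (Λ : Finset (Fin d → ℕ)) (hΛ : DownwardClosed Λ) (a : (Fin d → ℕ) → V) :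
    ∃ c : (Fin d → ℕ) → V, ∀ y, polyEval Λ a y = ∑ ν ∈ Λ, tT ν y • c ν := by
  classical
  obtain ⟨q, hq⟩ := exists_coeff
  refine ⟨fun μ => ∑ ν ∈ Λ, if μ ≤ ν then (∏ j, q (ν j) (μ j)) • a ν else 0, fun y => ?_⟩
  unfold polyEval
  simp_rw [Finset.smul_sum]
  rw [Finset.sum_comm]
  refine Finset.sum_congr rfl fun ν hν => ?_
  simp_rw [hq]
  rw [Finset.prod_univ_sum, Finset.sum_smul]
  simp_rw [smul_ite, smul_zero]
  rw [← Finset.sum_filter]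
  refine Finset.sum_congr ?_ fun μ _ => ?_
  · ext μ
    simp only [Fintype.mem_piFinset, Finset.mem_range, Finset.mem_filter, Nat.lt_succ_iff]
    exact ⟨fun h => ⟨hΛ ν hν μ h, h⟩, fun h => h.2⟩
  · rw [Finset.prod_mul_distrib, mul_comm, mul_smul]; rfl

end

lemma le_bisup {X : Type*} {s : Set X} {f : X → ℝ} {B : ℝ} (hf : ∀ x ∈ s, f x ≤ B)
    {x : X} (hx : x ∈ s) : f x ≤ ⨆ y ∈ s, f y := by
  have hb : BddAbove (Set.range fun y => ⨆ (_ : y ∈ s), f y) := by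
    refine ⟨max B 0, ?_⟩
    rintro _ ⟨y, rfl⟩
    by_cases hy : y ∈ s
    · simp [hy, hf y hy]
    · simp [hy]
  refine le_trans ?_ (le_ciSup hb x)
  simp [hx]

lemma bisup_le {X : Type*} [Nonempty X] {s : Set X} {f : X → ℝ} {B : ℝ} (hB : 0 ≤ B)
    (hf : ∀ x ∈ s, f x ≤ B) : ⨆ y ∈ s, f y ≤ B := by
  refine ciSup_le fun y => ?_
  by_cases hy : y ∈ s
  · simp [hy, hf y hy]
  · simp [hy, hB]

lemma bdd_of_bisup_pos {X : Type*} {s : Set X} {f : X → ℝ} (h : 0 < ⨆ y ∈ s, f y) :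
    ∃ B, ∀ x ∈ s, f x ≤ B := by
  by_cases hb : BddAbove (Set.range fun y => ⨆ (_ : y ∈ s), f y)
  · obtain ⟨B, hB⟩ := hb
    refine ⟨B, fun x hx => ?_⟩
    have := hB ⟨x, rfl⟩
    simpa [hx] using this
  · rw [Real.iSup_of_not_bddAbove hb] at h
    exact absurd h (lt_irrefl _)

lemma exists_dc {d : ℕ} (hd : 0 < d) (m : ℕ) :
    ∃ Λ : Finset (Fin d → ℕ), DownwardClosed Λ ∧ Λ.card = m := by
  classical
  let j : Fin d := ⟨0, hd⟩
  refine ⟨(Finset.range m).image fun k => Pi.single j k, ?_, ?_⟩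
  · intro ν hν μ hμ
    obtain ⟨k, hk, rfl⟩ := Finset.mem_image.1 hν
    refine Finset.mem_image.2 ⟨μ j, ?_, ?_⟩
    · have := hμ j
      simp at this hk ⊢
      omega
    · ext i
      by_cases hi : i = j
      · subst hi; simp
      · have := hμ i
        simp [hi] at this ⊢
        exact this.symm
  · rw [Finset.card_image_of_injective _ (Pi.single_injective j), Finset.card_range]

lemma prob_lower {d : ℕ} {V : Type*} [NormedAddCommGroup V] [InnerProductSpace ℝ V]
    (f : (Fin d → ℝ) → V) (hf : Continuous f)
    (hint : Integrable (fun y => ‖f y‖ ^ 2) (chebCube d)) (K τ : ℝ) (hK : 0 < K)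
    (hpos : 0 < ∫ y, ‖f y‖ ^ 2 ∂chebCube d) (hτ0 : 0 ≤ τ)
    (hτ : τ ^ 2 ≤ (∫ y, ‖f y‖ ^ 2 ∂chebCube d) / 4)
    (hle : ∀ y ∈ cube d, ‖f y‖ ^ 2 ≤ K * ∫ y, ‖f y‖ ^ 2 ∂chebCube d) :
    3 / (4 * K) ≤ (chebCube d).real {y | τ ≤ ‖f y‖} := by
  have hB : MeasurableSet {y | τ ≤ ‖f y‖} :=
    (isClosed_le continuous_const hf.norm).measurableSet
  set I := ∫ y, ‖f y‖ ^ 2 ∂chebCube d with hI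
  set B := {y | τ ≤ ‖f y‖} with hBdef
  have h1 : I ≤ ∫ y, (B.indicator (fun _ => K * I) y + τ ^ 2) ∂chebCube d := by
    refine integral_mono_ae hint
      (((integrable_const _).indicator hB).add (integrable_const _)) ?_
    have hc : ∀ᵐ y ∂chebCube d, y ∈ cube d :=
      (prob_compl_eq_zero_iff (cube_closed d)).2 (chebCube_cube d)
    filter_upwards [hc] with y hy
    by_cases hyB : y ∈ B
    · have := hle y hy
      simp only [Set.indicator_of_mem hyB]
      nlinarith [sq_nonneg τ]
    · simp only [Set.indicator_of_notMem hyB, zero_add]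
      have : ‖f y‖ < τ := not_le.1 hyB
      exact pow_le_pow_left₀ (norm_nonneg _) this.le 2
  rw [integral_add ((integrable_const _).indicator hB) (integrable_const _),
    integral_indicator_const _ hB] at h1
  simp at h1
  set p := (chebCube d).real B
  have h2 : 3 / 4 ≤ p * K := by
    have : I * (3/4) ≤ I * (p * K) := by nlinarith
    exact le_of_mul_le_mul_left this hpos
  rw [div_le_iff₀ (by positivity)]
  linarith

theorem statement11 {d : ℕ} (hd : 0 < d) {V : Type*} [NormedAddCommGroup V]
    [InnerProductSpace ℝ V]
    (r α : ℝ) (hα : α = Real.log 3 / (2 * Real.log 2)) (hr : α < r)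
    (v : (Fin d → ℝ) → V) (hv : MemA r v)
    (M0 : ℝ) (hM0 : normA r v ≤ M0)
    (M : ℝ) (hM : M = ⨆ y ∈ cube d, ‖v y‖) (hMpos : 0 < M)
    (m : ℕ) (hm : 1 ≤ m) (hcond : 4 * M0 * (m : ℝ) ^ (-r + α) < M)
    (N : ℕ) (hN : 1 ≤ N) :
    ENNReal.ofReal (1 - (1 - 3 / (4 * (m : ℝ) ^ (2 * α))) ^ N) ≤
      (Measure.pi fun _ : Fin N => chebCube d)
        {ys : Fin N → Fin d → ℝ |
          (∀ i, ys i ∈ cube d) ∧ ∃ i, M / (8 * (m : ℝ) ^ α) ≤ ‖v (ys i)‖} := by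
  have hm1 : (1:ℝ) ≤ m := by exact_mod_cast hm
  have hm0 : (0:ℝ) < m := by linarith
  have l2 : 0 < Real.log 2 := Real.log_pos (by norm_num)
  have h23 : Real.log 2 ≤ Real.log 3 := Real.log_le_log (by norm_num) (by norm_num)
  have hβ' : 2 * α = Real.log 3 / Real.log 2 := by rw [hα]; field_simp
  have hβ : 1 ≤ 2 * α := by rw [hβ', one_le_div l2]; exact h23
  have h2β : (2:ℝ) ^ (2 * α) = 3 := by
    rw [hβ', Real.rpow_def_of_pos (by norm_num), mul_div_cancel₀ _ l2.ne',
      Real.exp_log (by norm_num)]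
  set κ := (m : ℝ) ^ α with hκ
  have hκ1 : 1 ≤ κ := Real.one_le_rpow hm1 (by linarith)
  have hκ2 : (m : ℝ) ^ (2 * α) = κ ^ 2 := by
    rw [hκ, ← Real.rpow_natCast, ← Real.rpow_mul hm0.le]; congr 1; push_cast; ring
  -- bound on the best approximation
  obtain ⟨Bv, hBv⟩ := bdd_of_bisup_pos (hM ▸ hMpos)
  have hs : semiA r v ≤ M0 := (le_max_right _ _).trans hM0
  have hmr : 0 < (m:ℝ) ^ (-r) := Real.rpow_pos_of_pos hm0 _
  have hδ : deltaApprox v m ≤ M0 * (m:ℝ) ^ (-r) := by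
    rw [← div_le_iff₀ hmr]
    refine le_trans (le_csInf ?_ ?_) hs
    · obtain ⟨C, h0, hC⟩ := hv; exact ⟨C, h0, hC⟩
    · rintro C ⟨h0, hC⟩
      rw [div_le_iff₀ hmr]; exact hC m hm
  have hδ' : deltaApprox v m < M / (4 * κ) := by
    refine hδ.trans_lt ?_
    rw [lt_div_iff₀ (by positivity)]
    rw [Real.rpow_add hm0] at hcond
    calc M0 * (m:ℝ) ^ (-r) * (4 * κ) = 4 * M0 * ((m:ℝ) ^ (-r) * κ) := by ring
      _ < M := hcond
  obtain ⟨Λ₀, hΛ₀, hc₀⟩ := exists_dc hd m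
  have hne : { e | ∃ (Λ : Finset (Fin d → ℕ)) (a : (Fin d → ℕ) → V),
      DownwardClosed Λ ∧ Λ.card = m ∧
        e = ⨆ y ∈ cube d, ‖v y - polyEval Λ a y‖ }.Nonempty :=
    ⟨_, Λ₀, fun _ => (0:V), hΛ₀, hc₀, rfl⟩
  obtain ⟨e, ⟨Λ, a, hΛ, hcard, he⟩, heM⟩ := exists_lt_of_csInf_lt hne hδ'
  obtain ⟨c, hc⟩ := polyEval_eq Λ hΛ a
  set P : (Fin d → ℝ) → V := fun y => ∑ ν ∈ Λ, tT ν y • c ν with hP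
  have hclose : ∀ y ∈ cube d, ‖v y - P y‖ ≤ e := by
    intro y hy
    rw [he, hP]
    simp only [hc]
    refine le_bisup (f := fun y => ‖v y - ∑ ν ∈ Λ, tT ν y • c ν‖)
      (B := Bv + ∑ ν ∈ Λ, ‖c ν‖) (fun x hx => ?_) hy
    exact (norm_sub_le _ _).trans (add_le_add (hBv x hx) (norm_le_sum Λ c hx))
  have h0cube : (0 : Fin d → ℝ) ∈ cube d := by intro i _; simp
  have he0 : 0 ≤ e := (norm_nonneg _).trans (hclose 0 h0cube)
  have hPc : Continuous P := by
    rw [hP]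
    exact continuous_finsetSum _ fun ν _ => (tT_cont ν).smul continuous_const
  set I := ∫ y, ‖P y‖ ^ 2 ∂chebCube d with hI
  have hI0 : 0 ≤ I := integral_nonneg fun _ => by positivity
  have hle : ∀ y ∈ cube d, ‖P y‖ ^ 2 ≤ κ ^ 2 * I := by
    intro y hy
    refine (normsq_le Λ c hy).trans (mul_le_mul_of_nonneg_right ?_ hI0)
    rw [← hκ2]
    exact sum_wt_le hβ h2β m Λ hΛ hcard
  have hMI : M ≤ κ * √I + e := by
    rw [hM]
    refine bisup_le (by positivity) fun y hy => ?_
    have h1 : ‖P y‖ ≤ κ * √I := by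
      refine abs_le_of_sq_le_sq' ?_ (by positivity) |>.2
      rw [mul_pow, Real.sq_sqrt hI0]; exact hle y hy
    have h2 := hclose y hy
    have h3 := norm_sub_norm_le (v y) (P y)
    linarith
  set τ := M / (8 * κ) + e with hτ
  have hκ0 : 0 < κ := by linarith
  have heκ : e * (4 * κ) < M := (lt_div_iff₀ (by positivity)).1 heM
  have hτI : 2 * τ ≤ √I := by
    refine le_of_mul_le_mul_left ?_ hκ0
    have : κ * (2 * τ) = M / 4 + 2 * (e * κ) := by rw [hτ]; field_simp; ring
    rw [this]
    have : e ≤ e * κ := le_mul_of_one_le_right he0 hκ1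
    linarith
  have hτ0 : 0 < τ := by positivity
  have hIs : √I ^ 2 = I := Real.sq_sqrt hI0
  have hp := prob_lower P hPc (normsq_integrable Λ c) (κ ^ 2) τ (by positivity)
    (by rw [← hI, ← hIs]; have : 0 < √I := by linarith
        positivity) hτ0.le (by rw [← hI]; nlinarith) hle
  set B := {y | τ ≤ ‖P y‖} with hB
  have hBm : MeasurableSet B := (isClosed_le continuous_const hPc.norm).measurableSet
  rw [hκ2]
  set p := (chebCube d).real B with hpdef
  have hp1 : p ≤ 1 := measureReal_le_one
  have hsub : (Set.univ.pi fun _ : Fin N => cube d) \ (Set.univ.pi fun _ : Fin N => Bᶜ) ⊆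
      {ys : Fin N → Fin d → ℝ |
          (∀ i, ys i ∈ cube d) ∧ ∃ i, M / (8 * κ) ≤ ‖v (ys i)‖} := by
    rintro ys ⟨h1, h2⟩
    refine ⟨fun i => h1 i trivial, ?_⟩
    simp only [Set.mem_pi, Set.mem_univ, true_imp_iff, not_forall, Set.mem_compl_iff,
      not_not] at h2
    obtain ⟨i, hi⟩ := h2
    refine ⟨i, ?_⟩
    have h3 : τ ≤ ‖P (ys i)‖ := hi
    have h4 := hclose _ (h1 i trivial)
    rw [norm_sub_rev] at h4
    have h5 := norm_sub_norm_le (P (ys i)) (v (ys i))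
    linarith
  refine le_trans ?_ ((le_measure_sdiff).trans (measure_mono hsub))
  rw [Measure.pi_pi, Measure.pi_pi]
  simp only [chebCube_cube, Finset.prod_const, one_pow, Finset.card_univ, Fintype.card_fin]
  have hBc : chebCube d Bᶜ = ENNReal.ofReal (1 - p) := by
    rw [← ofReal_measureReal, probReal_compl_eq_one_sub hBm]
  rw [hBc, ← ENNReal.ofReal_pow (by linarith), ← ENNReal.ofReal_one,
    ← ENNReal.ofReal_sub _ (pow_nonneg (by linarith) _)]
  refine ENNReal.ofReal_le_ofReal (sub_le_sub_left (pow_le_pow_left₀ (by linarith) ?_ N) _)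
  linarith
end

section
/- Let V be a real Hilbert space, K a compact subset of V, r > 2, M0 > 0, and suppose d_k(K) ≤ M0·(max{1,k})^{-r} for all k ≥ 0. Let m ≥ 1 be an integer and ε > 0 satisfy 32·M0·m^{-(r-2)} ≤ ε and 2^{4r+2}·m^{-r} ≤ 1. Then any weak greedy sequence (u^k)_{k≥0} in K with parameter γ = 1/(8m) satisfies σ_{m²}(K) ≤ ε. -/
/-- The Kolmogorov `n`-width of a set `K` in a real inner product space:
the infimum over all subspaces `E` of dimension at most `n` of the worst-case
distance `‖u - P_E u‖ = infDist u E` over `u ∈ K`. -/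
noncomputable def kolWidth {V : Type*} [NormedAddCommGroup V] [InnerProductSpace ℝ V]
    (K : Set V) (n : ℕ) : ℝ :=
  ⨅ E : {E : Submodule ℝ V // Module.rank ℝ E ≤ (n : Cardinal)},
    ⨆ u ∈ K, Metric.infDist u (E.1 : Set V)

/-- The greedy error `σ_n(K) = sup_{x ∈ K} ‖x - P_{V_n} x‖` where
`V_n = span{u^0, …, u^{n-1}}`. -/
noncomputable def greedyErr {V : Type*} [NormedAddCommGroup V] [InnerProductSpace ℝ V]
    (u : ℕ → V) (K : Set V) (n : ℕ) : ℝ :=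
  ⨆ x ∈ K, Metric.infDist x (Submodule.span ℝ (u '' Set.Iio n) : Set V)

/-- `u` is a weak greedy sequence for `K` with parameter `γ`:
`‖u^n - P_{V_n} u^n‖ ≥ γ · σ_n(K)` for all `n`. -/
def IsWeakGreedy {V : Type*} [NormedAddCommGroup V] [InnerProductSpace ℝ V]
    (u : ℕ → V) (K : Set V) (γ : ℝ) : Prop :=
  ∀ n : ℕ, γ * greedyErr u K n ≤
    Metric.infDist (u n) (Submodule.span ℝ (u '' Set.Iio n) : Set V)

open Module in
lemma aux_det_bound {n : ℕ} (p q : Fin n → EuclideanSpace ℝ (Fin n))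
    (F : Submodule ℝ (EuclideanSpace ℝ (Fin n))) (j : ℕ) (hj : j ≤ n)
    (hF : finrank ℝ F ≤ j) (hp : ∀ i, p i ∈ F) (A D : ℝ) (hD : 0 ≤ D) (hDA : D ≤ A)
    (hpA : ∀ i, ‖p i‖ ≤ A) (hqD : ∀ i, ‖q i‖ ≤ D) :
    |(EuclideanSpace.basisFun (Fin n) ℝ).toBasis.det (p + q)| ≤ 2 ^ n * (A ^ j * D ^ (n - j)) := by
  have hA : 0 ≤ A := hD.trans hDA
  set b := EuclideanSpace.basisFun (Fin n) ℝ
  haveI : Fact (finrank ℝ (EuclideanSpace ℝ (Fin n)) = n) := ⟨by simp⟩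
  have hadd : b.toBasis.det (p + q) = ∑ s : Finset (Fin n), b.toBasis.det (s.piecewise p q) :=
    b.toBasis.det.toMultilinearMap.map_add_univ p q
  have hterm : ∀ s : Finset (Fin n), |b.toBasis.det (s.piecewise p q)| ≤ A ^ j * D ^ (n - j) := by
    intro s
    by_cases hs : s.card ≤ j
    · rw [← b.toBasis.orientation.volumeForm_robust' b]
      refine (Orientation.abs_volumeForm_apply_le _ _).trans ?_
      have h1 : ∏ i, ‖s.piecewise p q i‖ ≤ ∏ i, (s.piecewise (fun _ => A) (fun _ => D) i : ℝ) := by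
        apply Finset.prod_le_prod
        · intros; positivity
        · intro i _
          by_cases h : i ∈ s <;> simp [h, hpA, hqD]
      refine h1.trans ?_
      rw [Finset.prod_piecewise]
      simp only [Finset.univ_inter, Finset.prod_const, ← Finset.compl_eq_univ_sdiff,
        Finset.card_compl, Fintype.card_fin]
      have e1 : n - s.card = (j - s.card) + (n - j) := by omega
      have e2 : A ^ j = A ^ s.card * A ^ (j - s.card) := by
        rw [← pow_add]; congr 1; omega
      rw [e1, e2, pow_add, ← mul_assoc]
      gcongr
    · rw [AlternatingMap.map_linearDependent]
      · simp; positivity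
      · intro hli
        apply hs
        have h2 : LinearIndependent ℝ (fun i : s => p i) := by
          have := hli.comp (fun i : s => (i : Fin n)) Subtype.val_injective
          have e : (s.piecewise p q ∘ fun i : s => (i : Fin n)) = fun i : s => p i := by
            ext1 i
            simp
          rwa [e] at this
        have h3 := finrank_span_eq_card h2
        have h4 : Submodule.span ℝ (Set.range (fun i : s => p i)) ≤ F := by
          rw [Submodule.span_le]
          rintro _ ⟨i, rfl⟩
          exact hp i
        have h5 := Submodule.finrank_mono h4
        simp at h3
        omega
  rw [hadd]
  refine (Finset.abs_sum_le_sum_abs _ _).trans ((Finset.sum_le_card_nsmul _ _ _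
    (fun s _ => hterm s)).trans ?_)
  simp

open Module InnerProductSpace in
lemma aux_key {V : Type*} [NormedAddCommGroup V] [InnerProductSpace ℝ V]
    (n j : ℕ) (hj : j ≤ n) (u p : ℕ → V) (E : Submodule ℝ V) [FiniteDimensional ℝ E]
    (hE : finrank ℝ E ≤ j) (hp : ∀ i, p i ∈ E) (A D c : ℝ) (hD : 0 ≤ D) (hDA : D ≤ A)
    (hpA : ∀ i, ‖p i‖ ≤ A) (hqD : ∀ i, ‖u i - p i‖ ≤ D) (hc : 0 < c)
    (hu : ∀ i < n, c ≤ Metric.infDist (u i) (Submodule.span ℝ (u '' Set.Iio i) : Set V)) :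
    c ^ n ≤ 2 ^ n * (A ^ j * D ^ (n - j)) := by
  have hgs : ∀ i < n, c ≤ ‖gramSchmidt ℝ u i‖ := by
    intro i hi
    refine (hu i hi).trans ?_
    have hmem : u i - gramSchmidt ℝ u i ∈ (Submodule.span ℝ (u '' Set.Iio i) : Set V) := by
      rw [← span_gramSchmidt_Iio ℝ u i]
      have := gramSchmidt_def'' ℝ u i
      rw [sub_eq_iff_eq_add'.2 this]
      refine Submodule.sum_mem _ fun k hk => Submodule.smul_mem _ _ (Submodule.subset_span ?_)
      exact ⟨k, by simpa using hk, rfl⟩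
    refine (Metric.infDist_le_dist_of_mem hmem).trans ?_
    simp [dist_eq_norm]
  set e : Fin n → V := fun i => gramSchmidtNormed ℝ u i with he
  have hne : ∀ i : Fin n, gramSchmidt ℝ u i ≠ 0 := fun i h => by
    have := hgs i i.2
    rw [h, norm_zero] at this; linarith
  have heo : Orthonormal ℝ e := by
    constructor
    · intro i
      apply gramSchmidtNormed_unit_length'
      simp [gramSchmidtNormed, hne i]
    · intro i k hik
      simp only [he, gramSchmidtNormed, inner_smul_left, inner_smul_right]
      rw [gramSchmidt_orthogonal ℝ u (fun h => hik (Fin.ext h))]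
      simp
  let T : V →ₗ[ℝ] EuclideanSpace ℝ (Fin n) :=
    { toFun := fun x => WithLp.toLp 2 (fun i => inner ℝ (e i) x)
      map_add' := fun x y => by ext i; simp [inner_add_right]
      map_smul' := fun a x => by ext i; simp [inner_smul_right] }
  have hT : ∀ x i, T x i = inner ℝ (e i) x := fun x i => rfl
  have hTn : ∀ x, ‖T x‖ ≤ ‖x‖ := by
    intro x
    have := heo.sum_inner_products_le x (s := Finset.univ)
    rw [EuclideanSpace.norm_eq]
    exact Real.sqrt_le_iff.2 ⟨norm_nonneg _, this⟩
  have hb := aux_det_bound (fun i : Fin n => T (p i)) (fun i : Fin n => T (u i - p i)) (E.map T) j hj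
    ((Submodule.finrank_map_le T E).trans hE) (fun i => Submodule.mem_map_of_mem (hp i)) A D hD hDA
    (fun i => (hTn _).trans (hpA i)) (fun i => (hTn _).trans (hqD i))
  refine le_trans ?_ hb
  have hsum : ((fun i : Fin n => T (p i)) + fun i : Fin n => T (u i - p i))
      = fun i : Fin n => T (u i) := by
    ext1 i
    simp [← map_add]
  rw [hsum, Basis.det_apply, Matrix.det_of_upperTriangular, Finset.abs_prod]
  · rw [← Fin.prod_const n c]
    apply Finset.prod_le_prod
    · intros; exact hc.le
    · intro i _
      have : (EuclideanSpace.basisFun (Fin n) ℝ).toBasis.toMatrix (fun i : Fin n => T (u i)) i i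
        = ‖gramSchmidt ℝ u i‖ := by
        simp only [Basis.toMatrix_apply, OrthonormalBasis.coe_toBasis_repr_apply,
          EuclideanSpace.basisFun_repr, hT, he, gramSchmidtNormed, inner_smul_left]
        have h := gramSchmidt_def'' ℝ u i
        have h1 : inner ℝ (gramSchmidt ℝ u i) (u i) = ‖gramSchmidt ℝ u i‖ ^ 2 := by
          conv_lhs => rw [h]
          rw [inner_add_right, inner_sum, Finset.sum_eq_zero, real_inner_self_eq_norm_sq, add_zero]
          intro k hk
          rw [inner_smul_right, gramSchmidt_orthogonal, mul_zero]
          simp at hk; omega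
        rw [h1]
        have := norm_ne_zero_iff.2 (hne i)
        simp
        field_simp
      rw [this]
      exact (hgs i i.2).trans (le_abs_self _)
  · intro i k hik
    simp only [Basis.toMatrix_apply, OrthonormalBasis.coe_toBasis_repr_apply,
          EuclideanSpace.basisFun_repr, hT, he, gramSchmidtNormed, inner_smul_left]
    rw [gramSchmidt_inv_triangular ℝ u (by exact_mod_cast hik), mul_zero]

lemma aux_bdd {V : Type*} [NormedAddCommGroup V] [InnerProductSpace ℝ V]
    {K : Set V} (hK : IsCompact K) (E : Submodule ℝ V) :
    BddAbove (Set.range fun u => ⨆ _ : u ∈ K, Metric.infDist u (E : Set V)) := by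
  obtain ⟨B, hB⟩ := hK.isBounded.exists_norm_le
  refine ⟨max B 0, ?_⟩
  rintro _ ⟨x, rfl⟩
  refine Real.iSup_le (fun hx => ?_) (le_max_right _ _)
  refine (Metric.infDist_le_dist_of_mem E.zero_mem).trans ?_
  rw [dist_zero_right]
  exact (hB x hx).trans (le_max_left _ _)

lemma aux_le {V : Type*} [NormedAddCommGroup V] [InnerProductSpace ℝ V]
    {K : Set V} (hK : IsCompact K) (E : Submodule ℝ V) (x : V) (hx : x ∈ K) :
    Metric.infDist x (E : Set V) ≤ ⨆ u ∈ K, Metric.infDist u (E : Set V) := by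
  refine le_trans ?_ (le_ciSup (aux_bdd hK E) x)
  simp [hx]

lemma aux_anti {V : Type*} [NormedAddCommGroup V] [InnerProductSpace ℝ V]
    {K : Set V} (hK : IsCompact K) (u : ℕ → V) {i n : ℕ} (h : i ≤ n) :
    greedyErr u K n ≤ greedyErr u K i := by
  unfold greedyErr
  have h0 : 0 ≤ ⨆ x ∈ K, Metric.infDist x (Submodule.span ℝ (u '' Set.Iio i) : Set V) :=
    Real.iSup_nonneg fun x => Real.iSup_nonneg fun _ => Metric.infDist_nonneg
  refine Real.iSup_le (fun x => Real.iSup_le (fun hx => ?_) h0) h0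
  refine le_trans ?_ (aux_le hK _ x hx)
  refine Metric.infDist_le_infDist_of_subset ?_ ⟨0, Submodule.zero_mem _⟩
  exact Submodule.span_mono (Set.image_mono (Set.Iio_subset_Iio h))

open Module in
lemma aux_width {V : Type*} [NormedAddCommGroup V] [InnerProductSpace ℝ V]
    {K : Set V} (hK : IsCompact K) (k : ℕ) (D : ℝ) (h : kolWidth K k < D) :
    ∃ E : Submodule ℝ V, FiniteDimensional ℝ E ∧ finrank ℝ E ≤ k ∧
      ∀ x ∈ K, ∃ p ∈ E, ‖x - p‖ ≤ D := by
  haveI : Nonempty {E : Submodule ℝ V // Module.rank ℝ E ≤ (k : Cardinal)} := ⟨⟨⊥, by simp⟩⟩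
  obtain ⟨⟨E, hE⟩, hlt⟩ := exists_lt_of_ciInf_lt h
  have hfin : FiniteDimensional ℝ E :=
    Module.rank_lt_aleph0_iff.1 (hE.trans_lt Cardinal.natCast_lt_aleph0)
  refine ⟨E, hfin, finrank_le_of_rank_le hE, fun x hx => ?_⟩
  have h1 := (aux_le hK E x hx).trans_lt hlt
  obtain ⟨p, hp, hd⟩ := (Metric.infDist_lt_iff ⟨0, E.zero_mem⟩).1 h1
  exact ⟨p, hp, by rw [← dist_eq_norm]; exact hd.le⟩

theorem statement13 {V : Type*} [NormedAddCommGroup V] [InnerProductSpace ℝ V] [CompleteSpace V]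
    (K : Set V) (hK : IsCompact K) (r M0 : ℝ) (hr : 2 < r) (hM0 : 0 < M0)
    (hd : ∀ k : ℕ, kolWidth K k ≤ M0 * (max 1 (k : ℝ)) ^ (-r))
    (m : ℕ) (hm : 1 ≤ m) (ε : ℝ) (hε : 0 < ε)
    (hε1 : 32 * M0 * (m : ℝ) ^ (-(r - 2)) ≤ ε)
    (hε2 : (2 : ℝ) ^ (4 * r + 2) * (m : ℝ) ^ (-r) ≤ 1)
    (u : ℕ → V) (hu : ∀ n, u n ∈ K) (hwg : IsWeakGreedy u K (1 / (8 * m))) :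
    greedyErr u K (m ^ 2) ≤ ε := by
  by_contra! hcon
  have hm0 : (0 : ℝ) < m := by exact_mod_cast hm
  set x : ℝ := (m : ℝ) ^ (-r) with hx
  have hx0 : 0 < x := by positivity
  have hmr : (m : ℝ) ^ r * x = 1 := by
    rw [hx, ← Real.rpow_add hm0]; simp
  set y : ℝ := (2 : ℝ) ^ (2 * r) with hy
  have hy0 : 0 < y := by positivity
  have hy2 : (2 : ℝ) ^ (4 * r) = y ^ 2 := by
    rw [hy, sq, ← Real.rpow_add (by norm_num)]; congr 1; ring
  have hyx : y ^ 2 * x ≤ 1 / 4 := by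
    rw [Real.rpow_add (by norm_num), hy2] at hε2
    norm_num at hε2
    linarith
  have hm16 : 16 ≤ (m : ℝ) := by
    by_contra! hlt
    have h1 : (m : ℝ) ^ r < 16 ^ r := Real.rpow_lt_rpow hm0.le hlt (by linarith)
    have h2 : (16 : ℝ) ^ r = y ^ 2 := by
      rw [← hy2, Real.rpow_mul (by norm_num)]; norm_num
    rw [h2] at h1
    nlinarith
  have hm16' : 16 ≤ m := by exact_mod_cast hm16
  have hy1 : 1 ≤ y := Real.one_le_rpow (by norm_num) (by linarith)
  have hx1 : x ≤ 1 := by nlinarith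
  set n := m ^ 2 with hn
  have hn0 : 256 ≤ n := by rw [hn]; nlinarith
  obtain ⟨j, hj4, hj3, hjn⟩ : ∃ j : ℕ, n ≤ 4 * j ∧ 2 * n ≤ 3 * (n - j) ∧ j ≤ n :=
    ⟨(n + 3) / 4, by omega, by omega, by omega⟩
  set δ : ℝ := y * x ^ 2 with hδ
  have hδ0 : 0 < δ := by positivity
  have hδ2 : δ ^ 2 ≤ x ^ 3 := by
    have : δ ^ 2 = (y ^ 2 * x) * x ^ 3 := by rw [hδ]; ring
    rw [this]
    nlinarith [pow_pos hx0 3]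
  have hδ1 : δ ≤ 1 := by
    have : x ^ 3 ≤ 1 := pow_le_one₀ hx0.le hx1
    nlinarith
  have hδn : δ ^ (n - j) ≤ x ^ n := by
    have h1 : (δ ^ (n - j)) ^ 2 ≤ (x ^ n) ^ 2 := by
      calc (δ ^ (n - j)) ^ 2 = (δ ^ 2) ^ (n - j) := by rw [← pow_mul, ← pow_mul, mul_comm]
        _ ≤ (x ^ 3) ^ (n - j) := by gcongr
        _ = x ^ (3 * (n - j)) := by rw [← pow_mul]
        _ ≤ x ^ (2 * n) := pow_le_pow_of_le_one hx0.le hx1 hj3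
        _ = (x ^ n) ^ 2 := by rw [← pow_mul, mul_comm]
    exact (pow_le_pow_iff_left₀ (by positivity) (by positivity) (by norm_num)).1 h1
  have hdj : kolWidth K j < 2 * M0 * δ := by
    refine (hd j).trans_lt ?_
    have h1 : (max 1 (j : ℝ)) ^ (-r) ≤ ((m : ℝ) ^ 2 / 4) ^ (-r) := by
      apply Real.rpow_le_rpow_of_nonpos (by positivity) _ (by linarith)
      refine le_trans ?_ (le_max_right _ _)
      have : (n : ℝ) ≤ 4 * j := by exact_mod_cast hj4
      rw [hn] at this; push_cast at this
      linarith
    have h2 : ((m : ℝ) ^ 2 / 4) ^ (-r) = δ := by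
      have h4 : y = (4 : ℝ) ^ r := by
        rw [hy, Real.rpow_mul (by norm_num)]; norm_num
      have h5 : ((m : ℝ) ^ 2) ^ (-r) = x ^ 2 := by
        rw [sq, Real.mul_rpow hm0.le hm0.le, ← hx, sq]
      rw [Real.div_rpow (by positivity) (by norm_num), h5, hδ, h4,
        Real.rpow_neg (by norm_num), div_inv_eq_mul, mul_comm]
    rw [h2] at h1
    nlinarith
  have hd0 : kolWidth K 0 < 2 * M0 := by
    refine (hd 0).trans_lt ?_
    simp; linarith
  have hnorm : ∀ v ∈ K, ‖v‖ ≤ 2 * M0 := by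
    obtain ⟨E, hfin, hE, h⟩ := aux_width hK 0 _ hd0
    intro v hv
    obtain ⟨p, hp, hvp⟩ := h v hv
    have : E = ⊥ := Submodule.finrank_eq_zero.1 (by omega)
    rw [this, Submodule.mem_bot] at hp
    simpa [hp] using hvp
  obtain ⟨E, hfin, hE, h⟩ := aux_width hK j _ hdj
  choose p hpE hp using fun i => h (u i) (hu i)
  have hDM : 2 * M0 * δ ≤ 2 * M0 := by nlinarith
  have hkey := aux_key n j hjn u p E hE hpE (4 * M0) (2 * M0 * δ) (1 / (8 * m) * ε)
    (by positivity) (by linarith) (fun i => by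
      have h1 : p i = u i - (u i - p i) := by abel
      rw [h1]
      refine (norm_sub_le _ _).trans ?_
      linarith [hnorm _ (hu i), hp i]) hp (by positivity) (fun i hi => by
      refine le_trans ?_ (hwg i)
      have := aux_anti hK u hi.le
      gcongr
      linarith)
  have hc : 4 * m * M0 * x ≤ 1 / (8 * m) * ε := by
    have h1 : (m : ℝ) ^ (-(r - 2)) = m ^ 2 * x := by
      rw [hx, neg_sub, sub_eq_add_neg, Real.rpow_add hm0]; norm_num
    rw [h1] at hε1
    calc 4 * m * M0 * x = 1 / (8 * m) * (32 * M0 * (m ^ 2 * x)) := by field_simp; norm_num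
      _ ≤ _ := by gcongr
  have hfinal : (4 * m * M0 * x) ^ n ≤ (8 * M0 * x) ^ n := by
    calc (4 * m * M0 * x) ^ n ≤ (1 / (8 * m) * ε) ^ n := by gcongr
      _ ≤ _ := hkey
      _ ≤ 2 ^ n * ((4 * M0) ^ j * ((4 * M0) * δ) ^ (n - j)) := by gcongr; linarith
      _ = 2 ^ n * ((4 * M0) ^ (j + (n - j)) * δ ^ (n - j)) := by rw [mul_pow, pow_add]; ring
      _ ≤ 2 ^ n * ((4 * M0) ^ n * x ^ n) := by
        rw [Nat.add_sub_cancel' hjn]; gcongr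
      _ = _ := by rw [← mul_pow, ← mul_pow]; congr 1; ring
  have := (pow_le_pow_iff_left₀ (by positivity) (by positivity) (by omega : n ≠ 0)).1 hfinal
  have h3 : 0 < M0 * x := by positivity
  nlinarith
end

section
/- Let V be a real Hilbert space, K a compact subset of V with d_n(K) ≤ C0·(max{1,n})^{-s} for all n ≥ 0, for some s > 0 and C0 > 0. Let m ≥ 1 be an integer and let (u^k)_{k≥0} be a weak greedy sequence in K with parameter γ = 1/(8m). Then for every ε > 0 and every integer n ≥ 2^{4 + 10/s}·C0^{1/s}·m^{3/s}·ε^{-1/s}, one has σ_n(K) ≤ ε/(8m). -/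
open Module in
theorem hadamard_aux {F : Type*} [NormedAddCommGroup F] [InnerProductSpace ℝ F] {N : ℕ}
    (b b' : OrthonormalBasis (Fin N) ℝ F) (v : Fin N → F) :
    |b.toBasis.det v| = |b'.toBasis.det v| ∧ |b.toBasis.det v| ≤ ∏ i, ‖v i‖ := by
  have hf : finrank ℝ F = N := by simpa using Module.finrank_eq_card_basis b.toBasis
  have : Fact (finrank ℝ F = N) := ⟨hf⟩
  have h1 := b.toBasis.orientation.volumeForm_robust' b v
  have h2 := b.toBasis.orientation.volumeForm_robust' b' v
  have h3 := b.toBasis.orientation.abs_volumeForm_apply_le v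
  exact ⟨h1.symm.trans h2, h1 ▸ h3⟩

theorem scaled_aux {F : Type*} [NormedAddCommGroup F] [InnerProductSpace ℝ F] {N : ℕ}
    (b : OrthonormalBasis (Fin N) ℝ F) (v : Fin N → F) (c : Fin N → ℝ) :
    |∏ i, c i| * |b.toBasis.det v| ≤ ∏ i, √(∑ k, (c k * inner ℝ (b k) (v i)) ^ 2) := by
  set w : Fin N → F := fun i => ∑ k, (c k * inner ℝ (b k) (v i)) • b k with hw
  have hin : ∀ i k, inner ℝ (b k) (w i) = c k * inner ℝ (b k) (v i) := by
    intro i k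
    simp only [hw]
    rw [b.orthonormal.inner_right_sum _ (Finset.mem_univ k)]
  have hdet : b.toBasis.det w = (∏ i, c i) * b.toBasis.det v := by
    rw [Module.Basis.det_apply, Module.Basis.det_apply, ← Matrix.det_mul_column]
    congr 1
    ext k i
    simp [Module.Basis.toMatrix_apply, b.repr_apply_apply, hin]
  rw [← abs_mul, ← hdet]
  refine (hadamard_aux b b w).2.trans (le_of_eq ?_)
  refine Finset.prod_congr rfl fun i _ => ?_
  rw [← Real.sqrt_sq (norm_nonneg (w i)), ← b.sum_sq_inner_right]
  simp only [hin]

open Module in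
theorem adapted_basis {F : Type*} [NormedAddCommGroup F] [InnerProductSpace ℝ F]
    [FiniteDimensional ℝ F] {N j : ℕ} (hF : finrank ℝ F = N) (W : Submodule ℝ F)
    (hW : finrank ℝ W ≤ j) :
    ∃ b : OrthonormalBasis (Fin N) ℝ F, ∀ k : Fin N, j ≤ k → ∀ w ∈ W, inner ℝ (b k) w = 0 := by
  classical
  set r := finrank ℝ W with hr
  have hrN : r ≤ N := hF ▸ Submodule.finrank_le W
  let e := stdOrthonormalBasis ℝ W
  let v : Fin N → F := fun i => if h : (i : ℕ) < r then (e ⟨i, h⟩ : F) else 0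
  let s : Set (Fin N) := {i | (i : ℕ) < r}
  have hv : Orthonormal ℝ (s.domRestrict v) := by
    have : s.domRestrict v = (fun i : Fin r => (e i : F)) ∘ (fun i : s => ⟨i.1, i.2⟩) := by
      ext i
      have : ((i.1 : Fin N) : ℕ) < r := i.2
      simp [Set.domRestrict, v, this]
    rw [this]
    refine Orthonormal.comp ?_ _ ?_
    · exact e.orthonormal.comp_linearIsometry W.subtypeₗᵢ
    · intro x y h
      simp only [Fin.mk.injEq] at h
      exact Subtype.ext (Fin.ext h)
  obtain ⟨b, hb⟩ := hv.exists_orthonormalBasis_extension_of_card_eq (by simpa using hF)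
  refine ⟨b, fun k hk w hw => ?_⟩
  have hsum := e.sum_repr ⟨w, hw⟩
  have hsum2 : w = ∑ i, e.repr ⟨w, hw⟩ i • (e i : F) := by
    have := congrArg (Subtype.val) hsum
    simpa using this.symm
  rw [hsum2, inner_sum]
  refine Finset.sum_eq_zero fun i _ => ?_
  have hi : (i : ℕ) < N := i.2.trans_le hrN
  have : b ⟨i, hi⟩ = e i := by
    rw [hb ⟨i, hi⟩ i.2]
    exact dif_pos i.2
  rw [inner_smul_right, ← this, b.orthonormal.2, mul_zero]
  intro h
  have h2 : (k : ℕ) = i := by rw [h]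
  have := i.2
  omega

open Module in
/-- Determinant bound. -/
theorem det_bound {F : Type*} [NormedAddCommGroup F] [InnerProductSpace ℝ F]
    [FiniteDimensional ℝ F] {j : ℕ} (b' : OrthonormalBasis (Fin (j + j)) ℝ F) (W : Submodule ℝ F)
    (hW : finrank ℝ W ≤ j) (v : Fin (j + j) → F) {a d : ℝ} (ha : 0 < a) (hd : 0 < d)
    (hva : ∀ i, ‖v i‖ ≤ a) (hvd : ∀ i, ∃ w ∈ W, ‖v i - w‖ ≤ d) :
    |b'.toBasis.det v| ≤ (2 * a * d) ^ j := by
  have hF : finrank ℝ F = j + j := by simpa using Module.finrank_eq_card_basis b'.toBasis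
  obtain ⟨b, hb⟩ := adapted_basis hF W hW
  rw [(hadamard_aux b' b v).1]
  let c : Fin (j + j) → ℝ := fun k => if (k : ℕ) < j then a⁻¹ else d⁻¹
  have hc : ∏ i, c i = (a * d)⁻¹ ^ j := by
    rw [Fin.prod_univ_add]
    simp [c, mul_pow, mul_comm]
  have h := scaled_aux b v c
  have h2 : ∏ i, √(∑ k, (c k * inner ℝ (b k) (v i)) ^ 2) ≤ ∏ i : Fin (j + j), √2 := by
    refine Finset.prod_le_prod (fun _ _ => Real.sqrt_nonneg _) fun i _ => Real.sqrt_le_sqrt ?_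
    obtain ⟨w, hw, hwd⟩ := hvd i
    calc ∑ k, (c k * inner ℝ (b k) (v i)) ^ 2
        ≤ ∑ k, ((a⁻¹) ^ 2 * inner ℝ (b k) (v i) ^ 2 + (d⁻¹) ^ 2 * inner ℝ (b k) (v i - w) ^ 2) := by
          refine Finset.sum_le_sum fun k _ => ?_
          by_cases hk : (k : ℕ) < j
          · simp only [c, hk, if_true, mul_pow]
            have : 0 ≤ (d⁻¹) ^ 2 * inner ℝ (b k) (v i - w) ^ 2 := by positivity
            linarith
          · simp only [c, hk, if_false, mul_pow]
            rw [inner_sub_right, hb k (by omega) w hw, sub_zero]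
            have : 0 ≤ (a⁻¹) ^ 2 * inner ℝ (b k) (v i) ^ 2 := by positivity
            linarith
      _ = (a⁻¹ * ‖v i‖) ^ 2 + (d⁻¹ * ‖v i - w‖) ^ 2 := by
          rw [Finset.sum_add_distrib, ← Finset.mul_sum, ← Finset.mul_sum, b.sum_sq_inner_right,
            b.sum_sq_inner_right, mul_pow, mul_pow]
      _ ≤ 1 ^ 2 + 1 ^ 2 := by
          gcongr
          · rw [inv_mul_le_one₀ ha]; exact hva i
          · rw [inv_mul_le_one₀ hd]; exact hwd
      _ = 2 := by norm_num
  have h3 := h.trans h2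
  rw [hc, abs_of_pos (by positivity), Finset.prod_const, Finset.card_univ, Fintype.card_fin,
    pow_add, ← mul_pow, Real.mul_self_sqrt (by norm_num), inv_pow, inv_mul_le_iff₀ (by positivity),
    ← mul_pow] at h3
  have h4 : 2 * a * d = a * d * 2 := by ring
  rw [h4]
  exact h3

section
variable {V : Type*} [NormedAddCommGroup V] [InnerProductSpace ℝ V]

theorem bdd_aux {K : Set V} (hK : IsCompact K) (S : Submodule ℝ V) :
    BddAbove (Set.range fun x => ⨆ _ : x ∈ K, Metric.infDist x (S : Set V)) := by
  obtain ⟨C, hC⟩ := hK.isBounded.exists_norm_le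
  refine ⟨max C 0, ?_⟩
  rintro _ ⟨x, rfl⟩
  refine Real.iSup_le (fun hx => ?_) (le_max_right _ _)
  refine (Metric.infDist_le_dist_of_mem (S.zero_mem)).trans ?_
  rw [dist_zero_right]
  exact (hC x hx).trans (le_max_left _ _)

theorem le_sup_aux {K : Set V} (hK : IsCompact K) (S : Submodule ℝ V) {x : V} (hx : x ∈ K) :
    Metric.infDist x (S : Set V) ≤ ⨆ x ∈ K, Metric.infDist x (S : Set V) := by
  refine le_trans ?_ (le_ciSup (bdd_aux hK S) x)
  simp [hx]

theorem greedyErr_anti {K : Set V} (hK : IsCompact K) (u : ℕ → V) {p q : ℕ} (h : p ≤ q) :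
    greedyErr u K q ≤ greedyErr u K p := by
  have h0 : 0 ≤ greedyErr u K p :=
    Real.iSup_nonneg fun x => Real.iSup_nonneg fun _ => Metric.infDist_nonneg
  refine Real.iSup_le (fun x => Real.iSup_le (fun hx => ?_) h0) h0
  refine le_trans ?_ (le_sup_aux hK _ hx)
  refine Metric.infDist_le_infDist_of_subset ?_ ⟨0, Submodule.zero_mem _⟩
  exact Submodule.span_mono (Set.image_mono (Set.Iio_subset_Iio h))

theorem infDist_le_gs (u : ℕ → V) (k : ℕ) :
    Metric.infDist (u k) (Submodule.span ℝ (u '' Set.Iio k) : Set V) ≤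
      ‖InnerProductSpace.gramSchmidt ℝ u k‖ := by
  have h := InnerProductSpace.gramSchmidt_def ℝ u k
  rw [h, ← dist_eq_norm]
  refine Metric.infDist_le_dist_of_mem ?_
  rw [← InnerProductSpace.span_gramSchmidt_Iio ℝ u k]
  refine Submodule.sum_mem _ fun i hi => ?_
  have h1 := Submodule.starProjection_apply_mem (Submodule.span ℝ {InnerProductSpace.gramSchmidt ℝ u i}) (u k)
  refine Submodule.span_mono ?_ h1
  rw [Set.singleton_subset_iff]
  exact Set.mem_image_of_mem _ (by simpa using hi)

open Module InnerProductSpace in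
theorem key_step {K : Set V} (hK : IsCompact K) (u : ℕ → V) (hu : ∀ n, u n ∈ K) {γ : ℝ}
    (hγ : 0 < γ) (hwg : IsWeakGreedy u K γ) (j : ℕ) (hj : 1 ≤ j) {d : ℝ}
    (hd : kolWidth K j < d) (hσ : 0 < greedyErr u K (4 * j)) :
    (γ * greedyErr u K (4 * j)) ^ 2 ≤ 2 * greedyErr u K (2 * j) * d := by
  have : Nonempty {E : Submodule ℝ V // Module.rank ℝ E ≤ (j : Cardinal)} := ⟨⟨⊥, by simp⟩⟩
  obtain ⟨⟨E, hE⟩, hEd⟩ := exists_lt_of_ciInf_lt hd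
  simp only at hEd
  have hd0 : 0 < d := lt_of_le_of_lt
    (Real.iSup_nonneg fun x => Real.iSup_nonneg fun _ => Metric.infDist_nonneg) hEd
  have ha : 0 < greedyErr u K (2 * j) := hσ.trans_le (greedyErr_anti hK u (by omega))
  set σ := greedyErr u K (4 * j) with hσdef
  set a := greedyErr u K (2 * j) with hadef
  have hgs : ∀ k, k ≤ 4 * j → γ * σ ≤ ‖gramSchmidt ℝ u k‖ := fun k hk =>
    (mul_le_mul_of_nonneg_left (greedyErr_anti hK u hk) hγ.le).trans
      ((hwg k).trans (infDist_le_gs u k))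
  have hpos : 0 < γ * σ := mul_pos hγ hσ
  let e : Fin (j + j) → V := fun k => gramSchmidtNormed ℝ u (2 * j + k)
  have hne : ∀ k : Fin (j + j), gramSchmidt ℝ u (2 * j + k) ≠ 0 := fun k => by
    rw [← norm_pos_iff]; exact hpos.trans_le (hgs _ (by omega))
  have hin : ∀ (k : Fin (j + j)) (x : V), inner ℝ (e k) x =
      ‖gramSchmidt ℝ u (2 * j + k)‖⁻¹ * inner ℝ (gramSchmidt ℝ u (2 * j + k)) x := by
    intro k x
    simp [e, gramSchmidtNormed, inner_smul_left]
  have he : Orthonormal ℝ e := by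
    refine ⟨fun k => ?_, fun k l hkl => ?_⟩
    · have := norm_pos_iff.2 (hne k)
      simp only [e, gramSchmidtNormed, norm_smul]
      simp [this.ne']
    · change inner ℝ (e k) (e l) = 0
      rw [hin]
      have : (2 * j + k : ℕ) ≠ 2 * j + l := fun h => hkl (Fin.ext (by omega))
      simp [e, gramSchmidtNormed, inner_smul_right, gramSchmidt_orthogonal ℝ u this]
  let T : V →ₗ[ℝ] EuclideanSpace ℝ (Fin (j + j)) :=
    (WithLp.linearEquiv 2 ℝ (Fin (j + j) → ℝ)).symm.toLinearMap ∘ₗ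
      LinearMap.pi fun k => innerₛₗ ℝ (e k)
  have hT : ∀ x k, T x k = inner ℝ (e k) x := fun x k => by simp [T]
  have hTn : ∀ x, ‖T x‖ ≤ ‖x‖ := by
    intro x
    rw [← sq_le_sq₀ (norm_nonneg _) (norm_nonneg _), EuclideanSpace.norm_sq_eq]
    simp only [hT]
    exact he.sum_inner_products_le x
  have hT0 : ∀ x ∈ Submodule.span ℝ (u '' Set.Iio (2 * j)), T x = 0 := by
    intro x hx
    rw [← LinearMap.mem_ker]
    revert x
    change Submodule.span ℝ (u '' Set.Iio (2 * j)) ≤ LinearMap.ker T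
    rw [Submodule.span_le]
    rintro _ ⟨i, hi, rfl⟩
    rw [SetLike.mem_coe, LinearMap.mem_ker]
    ext k
    rw [hT, hin, gramSchmidt_inv_triangular ℝ u (by simp at hi; omega)]
    simp
  let v : Fin (j + j) → EuclideanSpace ℝ (Fin (j + j)) := fun i => T (u (2 * j + i))
  let b' := EuclideanSpace.basisFun (Fin (j + j)) ℝ
  have hdetv : b'.toBasis.det v = ∏ i : Fin (j + j), ‖gramSchmidt ℝ u (2 * j + i)‖ := by
    rw [Module.Basis.det_apply]
    have hM : ∀ k i, b'.toBasis.toMatrix v k i = inner ℝ (e k) (u (2 * j + i)) := by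
      intro k i
      rw [Module.Basis.toMatrix_apply, ← hT]
      simp [b', v]
    rw [Matrix.det_of_isUpperTriangular]
    · refine Finset.prod_congr rfl fun i _ => ?_
      have hp := norm_pos_iff.2 (hne i)
      rw [hM, hin]
      have : inner ℝ (gramSchmidt ℝ u (2 * j + i)) (u (2 * j + i)) =
          ‖gramSchmidt ℝ u (2 * j + i)‖ ^ 2 := by
        conv_lhs => rw [gramSchmidt_def'' ℝ u (2 * j + i)]
        rw [inner_add_right, inner_sum, real_inner_self_eq_norm_sq, Finset.sum_eq_zero, add_zero]
        intro l hl
        rw [inner_smul_right, gramSchmidt_orthogonal ℝ u (by simp at hl; omega), mul_zero]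
      rw [this]
      field_simp
    · intro k i hik
      have hik' : i < k := hik
      rw [hM, hin, gramSchmidt_inv_triangular ℝ u (by omega), mul_zero]
  have hEfin : Module.Finite ℝ E :=
    Module.rank_lt_aleph0_iff.1 (hE.trans_lt (Cardinal.natCast_lt_aleph0))
  have hEr : finrank ℝ E ≤ j := Module.finrank_le_of_rank_le hE
  have hmain := det_bound b' (E.map T) ((Submodule.finrank_map_le T E).trans hEr) v ha hd0
    (by
      intro i
      refine le_trans ?_ (le_sup_aux hK _ (hu (2 * j + i)))
      rw [Metric.le_infDist ⟨0, Submodule.zero_mem _⟩]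
      intro y hy
      have : v i = T (u (2 * j + i) - y) := by rw [map_sub, hT0 y hy, sub_zero]
      rw [this, dist_eq_norm]
      exact hTn _)
    (by
      intro i
      have h1 := (le_sup_aux hK E (hu (2 * j + i))).trans_lt hEd
      obtain ⟨y, hy, hyd⟩ := (Metric.infDist_lt_iff ⟨0, Submodule.zero_mem _⟩).1 h1
      refine ⟨T y, Submodule.mem_map_of_mem hy, ?_⟩
      rw [← map_sub]
      refine (hTn _).trans ?_
      rw [← dist_eq_norm]; exact hyd.le)
  rw [hdetv] at hmain
  have hlow : (γ * σ) ^ (j + j) ≤ ∏ i : Fin (j + j), ‖gramSchmidt ℝ u (2 * j + i)‖ := by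
    have := Finset.prod_le_prod (s := (Finset.univ : Finset (Fin (j + j)))) (f := fun _ => γ * σ)
      (g := fun i : Fin (j + j) => ‖gramSchmidt ℝ u (2 * j + i)‖) (fun _ _ => hpos.le)
      (fun i _ => hgs _ (by omega))
    simpa using this
  have h2 := hlow.trans ((le_abs_self _).trans hmain)
  rw [← two_mul, pow_mul] at h2
  exact le_of_pow_le_pow_left₀ (by omega) (by positivity) h2

theorem dyadic {K : Set V} (hK : IsCompact K) (u : ℕ → V) (hu : ∀ n, u n ∈ K) {γ : ℝ}
    (hγ : 0 < γ) (hγ1 : γ ≤ 1) (hwg : IsWeakGreedy u K γ) {s C0 : ℝ} (hs : 0 < s) (hC0 : 0 < C0)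
    (hd : ∀ n : ℕ, kolWidth K n ≤ C0 * (max 1 (n : ℝ)) ^ (-s)) (k : ℕ) :
    greedyErr u K (2 ^ k) * ((2 : ℝ) ^ s) ^ k ≤ 2 * ((2 : ℝ) ^ s) ^ 3 * C0 / γ ^ 2 := by
  set t := (2 : ℝ) ^ s with ht
  have ht1 : 1 ≤ t := Real.one_le_rpow (by norm_num) hs.le
  have hg : 1 ≤ 1 / γ ^ 2 := by rw [one_le_div (by positivity)]; exact pow_le_one₀ hγ.le hγ1
  have h0 : greedyErr u K 0 ≤ C0 := by
    have h1 := hd 0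
    simp only [Nat.cast_zero, max_eq_left zero_le_one, Real.one_rpow, mul_one] at h1
    refine le_trans (le_of_eq ?_) h1
    have : Nonempty {E : Submodule ℝ V // Module.rank ℝ E ≤ ((0 : ℕ) : Cardinal)} :=
      ⟨⟨⊥, by simp⟩⟩
    have hE : ∀ E : {E : Submodule ℝ V // Module.rank ℝ E ≤ ((0 : ℕ) : Cardinal)},
        E.1 = ⊥ := by
      rintro ⟨E, hE⟩
      simpa using hE
    unfold kolWidth greedyErr
    simp only [hE, ciInf_const]
    simp
  have hbase : ∀ p q : ℕ, q ≤ 3 → greedyErr u K p * t ^ q ≤ 2 * t ^ 3 * C0 / γ ^ 2 := by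
    intro p q hq
    have h1 : greedyErr u K p ≤ C0 := (greedyErr_anti hK u (Nat.zero_le p)).trans h0
    have h2 : t ^ q ≤ t ^ 3 := pow_le_pow_right₀ ht1 hq
    calc greedyErr u K p * t ^ q ≤ C0 * t ^ 3 := by gcongr
      _ = 1 * (C0 * t ^ 3) * 1 := by ring
      _ ≤ 2 * (C0 * t ^ 3) * (1 / γ ^ 2) := by gcongr; norm_num
      _ = _ := by ring
  induction k with
  | zero => exact hbase _ 0 (by norm_num)
  | succ k ih =>
    rcases Nat.eq_zero_or_pos k with rfl | hk
    · exact hbase _ 1 (by norm_num)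
    obtain ⟨l, rfl⟩ : ∃ l, k = l + 1 := ⟨k - 1, by omega⟩
    have e4 : 2 ^ (l + 1 + 1) = 4 * 2 ^ l := by ring
    have e2 : 2 ^ (l + 1) = 2 * 2 ^ l := by ring
    rw [e4]
    rw [e2] at ih
    rcases le_or_gt (greedyErr u K (4 * 2 ^ l)) 0 with hle | hpos
    · refine (mul_nonpos_of_nonpos_of_nonneg hle (by positivity)).trans (by positivity)
    have ha : 0 < greedyErr u K (2 * 2 ^ l) :=
      hpos.trans_le (greedyErr_anti hK u (by omega))
    have hdl : kolWidth K (2 ^ l) ≤ C0 / t ^ l := by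
      refine (hd _).trans (le_of_eq ?_)
      rw [max_eq_right (by exact_mod_cast Nat.one_le_two_pow), Real.rpow_neg (by positivity),
        div_eq_mul_inv, ht]
      push_cast
      rw [← Real.rpow_natCast, ← Real.rpow_natCast, ← Real.rpow_mul (by norm_num),
        ← Real.rpow_mul (by norm_num), mul_comm s]
    have hkey : (γ * greedyErr u K (4 * 2 ^ l)) ^ 2 ≤
        2 * greedyErr u K (2 * 2 ^ l) * (C0 / t ^ l) := by
      refine le_of_forall_gt_imp_ge_of_dense fun y hy => ?_
      have h1 : kolWidth K (2 ^ l) < y / (2 * greedyErr u K (2 * 2 ^ l)) := by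
        refine hdl.trans_lt ?_
        rw [lt_div_iff₀ (by positivity)]
        linarith
      have := key_step hK u hu hγ hwg (2 ^ l) Nat.one_le_two_pow h1 hpos
      rwa [mul_div_cancel₀ _ (by positivity)] at this
    set x := greedyErr u K (4 * 2 ^ l)
    set a := greedyErr u K (2 * 2 ^ l)
    have htp : 0 < t := by linarith
    set A := 2 * t ^ 3 * C0 / γ ^ 2 with hA
    have hAg : A * γ ^ 2 = 2 * t ^ 3 * C0 := by rw [hA]; field_simp
    have hA0 : 0 < A := by positivity
    have h1 : (γ * x) ^ 2 * t ^ l ≤ 2 * a * C0 := by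
      have := mul_le_mul_of_nonneg_right hkey (by positivity : 0 ≤ t ^ l)
      refine this.trans (le_of_eq ?_)
      field_simp
    have h2 : (x * t ^ (l + 1 + 1)) ^ 2 * γ ^ 2 ≤ A ^ 2 * γ ^ 2 := by
      calc (x * t ^ (l + 1 + 1)) ^ 2 * γ ^ 2 = ((γ * x) ^ 2 * t ^ l) * t ^ (l + 4) := by ring
        _ ≤ (2 * a * C0) * t ^ (l + 4) := by gcongr
        _ = (a * t ^ (l + 1)) * (2 * t ^ 3 * C0) := by ring
        _ ≤ A * (2 * t ^ 3 * C0) := by gcongr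
        _ = A ^ 2 * γ ^ 2 := by rw [← hAg]; ring
    have h3 := le_of_mul_le_mul_right h2 (by positivity)
    exact (pow_le_pow_iff_left₀ (by positivity) hA0.le two_ne_zero).1 h3

end

theorem statement14 {V : Type*} [NormedAddCommGroup V] [InnerProductSpace ℝ V] [CompleteSpace V]
    (K : Set V) (hK : IsCompact K) (s C0 : ℝ) (hs : 0 < s) (hC0 : 0 < C0)
    (hd : ∀ n : ℕ, kolWidth K n ≤ C0 * (max 1 (n : ℝ)) ^ (-s))
    (m : ℕ) (hm : 1 ≤ m)
    (u : ℕ → V) (hu : ∀ n, u n ∈ K) (hwg : IsWeakGreedy u K (1 / (8 * m)))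
    (ε : ℝ) (hε : 0 < ε) (n : ℕ)
    (hn : (2 : ℝ) ^ (4 + 10 / s) * C0 ^ (1 / s) * (m : ℝ) ^ ((3 : ℝ) / s) * ε ^ (-1 / s) ≤ n) :
    greedyErr u K n ≤ ε / (8 * m) := by
  have hm0 : (1 : ℝ) ≤ m := by exact_mod_cast hm
  have hmp : (0 : ℝ) < m := by linarith
  have hnpos : (0 : ℝ) < n := lt_of_lt_of_le (by positivity) hn
  have hn0 : n ≠ 0 := by rintro rfl; simp at hnpos
  have hdy := dyadic hK u hu (γ := 1 / (8 * m)) (by positivity)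
    (by rw [div_le_one (by positivity)]; linarith) hwg hs hC0 hd (Nat.log 2 n)
  have h1 : greedyErr u K n ≤ greedyErr u K (2 ^ Nat.log 2 n) :=
    greedyErr_anti hK u (Nat.pow_log_le_self 2 hn0)
  have hlt : (n : ℝ) ≤ 2 ^ (Nat.log 2 n + 1) := by
    exact_mod_cast (Nat.lt_pow_succ_log_self (by norm_num) n).le
  have hns : (n : ℝ) ^ s ≤ ((2 : ℝ) ^ s) ^ (Nat.log 2 n + 1) := by
    refine (Real.rpow_le_rpow hnpos.le hlt hs.le).trans (le_of_eq ?_)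
    rw [← Real.rpow_natCast, ← Real.rpow_natCast, ← Real.rpow_mul (by norm_num),
      ← Real.rpow_mul (by norm_num), mul_comm s]
  have hn2 : ((2 : ℝ) ^ s) ^ 4 * 2 ^ 10 * C0 * m ^ 3 / ε ≤ (n : ℝ) ^ s := by
    refine le_trans (le_of_eq ?_) (Real.rpow_le_rpow (by positivity) hn hs.le)
    rw [Real.mul_rpow (by positivity) (by positivity), Real.mul_rpow (by positivity) (by positivity),
      Real.mul_rpow (by positivity) (by positivity), ← Real.rpow_mul (by norm_num),
      ← Real.rpow_mul hC0.le, ← Real.rpow_mul hmp.le, ← Real.rpow_mul hε.le]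
    have e1 : (4 + 10 / s) * s = s * (4 : ℕ) + (10 : ℕ) := by push_cast; field_simp
    have e2 : 1 / s * s = 1 := by field_simp
    have e3 : (3 : ℝ) / s * s = (3 : ℕ) := by push_cast; field_simp
    have e4 : -1 / s * s = -1 := by field_simp
    rw [e1, e2, e3, e4, Real.rpow_add (by norm_num), Real.rpow_mul (by norm_num),
      Real.rpow_natCast, Real.rpow_natCast, Real.rpow_natCast, Real.rpow_one, Real.rpow_neg_one,
      div_eq_mul_inv]
  set t := (2 : ℝ) ^ s with ht
  have htp : 0 < t := by positivity
  set L := Nat.log 2 n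
  set x := greedyErr u K (2 ^ L)
  refine h1.trans ?_
  have hb : t ^ 4 * 2 ^ 10 * C0 * m ^ 3 ≤ t ^ (L + 1) * ε := by
    have := hn2.trans hns
    rwa [div_le_iff₀ hε] at this
  have hx : x * t ^ L ≤ 2 ^ 7 * t ^ 3 * C0 * m ^ 2 := by
    refine hdy.trans (le_of_eq ?_)
    field_simp
    norm_num
  rw [le_div_iff₀ (by positivity)]
  refine le_of_mul_le_mul_right ?_ (by positivity : 0 < t ^ (L + 1))
  calc x * (8 * m) * t ^ (L + 1) = (x * t ^ L) * (8 * m * t) := by ring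
    _ ≤ (2 ^ 7 * t ^ 3 * C0 * m ^ 2) * (8 * m * t) := by gcongr
    _ = t ^ 4 * 2 ^ 10 * C0 * m ^ 3 := by ring
    _ ≤ t ^ (L + 1) * ε := hb
    _ = ε * t ^ (L + 1) := by ring
end
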